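/- arXiv:2402.08044 — 2 statements merged into one kernel-verified Lean document; each statement's English description precedes it below -/
import Mathlib

section
/- Let 1 ≤ p ≤ ∞, let s > 0 be real, and let m be a positive integer with 2m ≥ s. Then there exists a constant C > 0 such that ‖J_{−s} φ‖_p ≤ C · Σ_{|α| ≤ 2m} ‖∂^α φ‖_p for all φ ∈ 𝒮(ℝⁿ), where the sum extends over all multi-indices α of order at most 2m. -/
open MeasureTheory Complex
open scoped FourierTransform ENNReal SchwartzMap

/-- The Bessel potential `J_z f = 𝓕⁻¹((1+|ξ|²)^(-z/2) · 𝓕 f)` of a function on `ℝⁿ`. -/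
noncomputable def besselPotential (n : ℕ) (z : ℂ)
    (f : EuclideanSpace ℝ (Fin n) → ℂ) : EuclideanSpace ℝ (Fin n) → ℂ :=
  𝓕⁻ (fun ξ => ((1 : ℂ) + (‖ξ‖ : ℂ) ^ 2) ^ (-z / 2) * 𝓕 f ξ)

/-- The partial derivative in the `j`-th coordinate direction. -/
noncomputable def pderivFun (n : ℕ) (j : Fin n)
    (f : EuclideanSpace ℝ (Fin n) → ℂ) : EuclideanSpace ℝ (Fin n) → ℂ :=
  fun x => fderiv ℝ f x (EuclideanSpace.single j (1 : ℝ))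

/-- The iterated partial derivative `∂^α` associated to a multi-index `α`. -/
noncomputable def multiDeriv (n : ℕ) (α : Fin n → ℕ)
    (f : EuclideanSpace ℝ (Fin n) → ℂ) : EuclideanSpace ℝ (Fin n) → ℂ :=
  (List.finRange n).foldr (fun j g => (pderivFun n j)^[α j] g) f

/-- The finset of multi-indices on `ℝⁿ` of order at most `N`. -/
noncomputable def multiIndicesLE (n N : ℕ) : Finset (Fin n → ℕ) :=
  (Fintype.piFinset fun _ : Fin n => Finset.range (N + 1)).filter fun α => ∑ j, α j ≤ N

/-!
Write `J_{-s} φ = J_{2m-s} ψ` with `ψ = (1 - (2π)⁻² Δ)^m φ`. Since `2m - s ≥ 0`, the symbol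
`(1 + ‖ξ‖²)^(-(2m-s)/2)` of `J_{2m-s}` is the characteristic function of a probability measure: a
mixture of centred Gaussians whose variance is gamma distributed. So `J_{2m-s}` averages translates
and is a contraction on every `L^p`, while `ψ` is a linear combination of the `∂^α φ` with
`|α| ≤ 2m`.
-/

section Averaging

variable {α β G F : Type*} [MeasurableSpace α] [MeasurableSpace β] [MeasurableSpace G]
  [NormedAddCommGroup F] [NormedSpace ℝ F] {p : ℝ≥0∞}

theorem enorm_integral_le_eLpNorm {μ : Measure β} [IsProbabilityMeasure μ] {f : β → F}
    (hf : AEStronglyMeasurable f μ) (hp : 1 ≤ p) : ‖∫ y, f y ∂μ‖ₑ ≤ eLpNorm f p μ :=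
  calc ‖∫ y, f y ∂μ‖ₑ ≤ ∫⁻ y, ‖f y‖ₑ ∂μ := enorm_integral_le_lintegral_enorm f
    _ = eLpNorm f 1 μ := eLpNorm_one_eq_lintegral_enorm.symm
    _ ≤ eLpNorm f p μ := eLpNorm_le_eLpNorm_of_exponent_le hp hf

theorem eLpNorm_integral_le_of_ae_eLpNorm_le {μ : Measure β} [IsProbabilityMeasure μ]
    {ν : Measure α} [SFinite ν] {f : α → β → F} (hf : StronglyMeasurable (Function.uncurry f))
    (hp : 1 ≤ p) {C : ℝ≥0∞} (hC : ∀ᵐ y ∂μ, eLpNorm (f · y) p ν ≤ C) :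
    eLpNorm (fun x => ∫ y, f x y ∂μ) p ν ≤ C := by
  have jensen (x : α) : ‖∫ y, f x y ∂μ‖ₑ ≤ eLpNorm (f x) p μ :=
    enorm_integral_le_eLpNorm (hf.comp_measurable measurable_prodMk_left).aestronglyMeasurable hp
  induction p with
  | top =>
    have hbound : ∀ᵐ x ∂ν, ∀ᵐ y ∂μ, ‖f x y‖ₑ ≤ C := by
      rw [Measure.ae_ae_comm (p := fun x y => ‖f x y‖ₑ ≤ C)
        (measurableSet_le hf.enorm measurable_const)]
      filter_upwards [hC] with y hy
      filter_upwards [enorm_ae_le_eLpNormEssSup (f · y) ν] with x hx using hx.trans hy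
    refine eLpNormEssSup_le_of_ae_enorm_bound ?_
    filter_upwards [hbound] with x hx
      using (jensen x).trans (eLpNormEssSup_le_of_ae_enorm_bound hx)
  | coe p =>
    have hp0 : p ≠ 0 := by rintro rfl; simp at hp
    rw [← ENNReal.rpow_le_rpow_iff (z := p) (by positivity), eLpNorm_nnreal_pow_eq_lintegral hp0]
    calc ∫⁻ x, ‖∫ y, f x y ∂μ‖ₑ ^ (p : ℝ) ∂ν
        ≤ ∫⁻ x, eLpNorm (f x) p μ ^ (p : ℝ) ∂ν := by gcongr with x; exact jensen x
      _ = ∫⁻ x, ∫⁻ y, ‖f x y‖ₑ ^ (p : ℝ) ∂μ ∂ν := by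
        simp_rw [eLpNorm_nnreal_pow_eq_lintegral hp0]
      _ = ∫⁻ y, ∫⁻ x, ‖f x y‖ₑ ^ (p : ℝ) ∂ν ∂μ :=
        lintegral_lintegral_swap (hf.enorm.pow_const _).aemeasurable
      _ = ∫⁻ y, eLpNorm (f · y) p ν ^ (p : ℝ) ∂μ := by
        simp_rw [eLpNorm_nnreal_pow_eq_lintegral hp0]
      _ ≤ ∫⁻ _, C ^ (p : ℝ) ∂μ := lintegral_mono_ae <| by
        filter_upwards [hC] with y hy using by gcongr
      _ = C ^ (p : ℝ) := by simp

theorem eLpNorm_integral_comp_add_le [Add G] [MeasurableAdd₂ G] (μ : Measure G)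
    [IsProbabilityMeasure μ] (ν : Measure G) [SFinite ν] [ν.IsAddRightInvariant] {f : G → F}
    (hf : StronglyMeasurable f) (hp : 1 ≤ p) :
    eLpNorm (fun x => ∫ y, f (x + y) ∂μ) p ν ≤ eLpNorm f p ν :=
  eLpNorm_integral_le_of_ae_eLpNorm_le (f := fun x y => f (x + y))
    (hf.comp_measurable measurable_add) hp <| ae_of_all _ fun y =>
      (eLpNorm_comp_measurePreserving hf.aestronglyMeasurable
        (measurePreserving_add_right ν y)).le

end Averaging

section CharFunMultiplier

variable {E F : Type*} [NormedAddCommGroup E] [InnerProductSpace ℝ E] [FiniteDimensional ℝ E]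
  [MeasurableSpace E] [BorelSpace E] [NormedAddCommGroup F] [NormedSpace ℂ F] [CompleteSpace F]
  {f : E → F}

theorem fourierInv_charFun_smul_fourier (μ : Measure E) [IsFiniteMeasure μ]
    (hf : Continuous f) (hfi : Integrable f) (hFi : Integrable (𝓕 f)) (x : E) :
    𝓕⁻ (fun ξ => charFun μ ((2 * Real.pi) • ξ) • 𝓕 f ξ) x = ∫ y, f (x + y) ∂μ := by
  have inversion (z : E) : f z = ∫ ξ, exp (↑(2 * Real.pi * inner ℝ ξ z) * I) • 𝓕 f ξ := by
    rw [← Real.fourierInv_eq', hf.fourierInv_fourier_eq hfi hFi]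
  have integrable_prod : Integrable (fun z : E × E =>
      exp (↑(2 * Real.pi * inner ℝ z.2 (x + z.1)) * I) • 𝓕 f z.2) (μ.prod volume) := by
    refine (hFi.comp_snd μ).bdd_smul 1 (Continuous.aestronglyMeasurable (by fun_prop))
      (ae_of_all _ fun z => (norm_exp_ofReal_mul_I _).le)
  rw [Real.fourierInv_eq']
  simp_rw [inversion (x + _)]
  rw [integral_integral_swap integrable_prod]
  congr 1 with ξ
  rw [integral_smul_const, smul_smul, charFun_apply, ← integral_const_mul]
  congr 2 with y
  rw [← Complex.exp_add, inner_add_right, inner_smul_right, real_inner_comm y ξ]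
  push_cast
  ring_nf

theorem eLpNorm_fourierInv_charFun_smul_fourier_le (μ : Measure E) [IsProbabilityMeasure μ]
    (hf : Continuous f) (hfi : Integrable f) (hFi : Integrable (𝓕 f)) {p : ℝ≥0∞} (hp : 1 ≤ p) :
    eLpNorm (𝓕⁻ fun ξ => charFun μ ((2 * Real.pi) • ξ) • 𝓕 f ξ) p volume ≤
      eLpNorm f p volume := by
  rw [funext (fourierInv_charFun_smul_fourier μ hf hfi hFi)]
  exact eLpNorm_integral_comp_add_le μ volume hf.stronglyMeasurable hp

end CharFunMultiplier

section GaussianMixture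

open ProbabilityTheory

theorem ae_gammaMeasure_nonneg (a r : ℝ) : ∀ᵐ u ∂gammaMeasure a r, 0 ≤ u := by
  have hneg : {u : ℝ | ¬ 0 ≤ u} = Set.Iio 0 := by ext; simp
  rw [ae_iff, hneg, gammaMeasure, withDensity_apply _ measurableSet_Iio,
    lintegral_gammaPDF_of_nonpos le_rfl]

theorem mgf_id_gammaMeasure {a r t : ℝ} (ha : 0 < a) (hr : 0 < r) (ht : t < r) :
    mgf id (gammaMeasure a r) t = (1 - t / r) ^ (-a) := by
  have hdensity : ∀ u ∈ Set.Ici (0 : ℝ), gammaPDFReal a r u • Real.exp (t * u) =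
      r ^ a / Real.Gamma a * (u ^ (a - 1) * Real.exp (-((r - t) * u))) := by
    intro u hu
    rw [gammaPDFReal, if_pos (Set.mem_Ici.1 hu), smul_eq_mul, mul_assoc, mul_assoc, ← Real.exp_add]
    ring_nf
  have hsupport : ∀ u ∉ Set.Ici (0 : ℝ), gammaPDFReal a r u • Real.exp (t * u) = 0 := by
    intro u hu
    rw [gammaPDFReal, if_neg (mt Set.mem_Ici.2 hu), zero_smul]
  have hmeas : Measurable (gammaPDF a r) := (measurable_gammaPDFReal a r).ennreal_ofReal
  calc mgf id (gammaMeasure a r) t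
      = ∫ u, gammaPDFReal a r u • Real.exp (t * u) := by
        rw [mgf, gammaMeasure, integral_withDensity_eq_integral_toReal_smul hmeas
          (ae_of_all _ fun _ => ENNReal.ofReal_lt_top)]
        simp only [gammaPDF, ENNReal.toReal_ofReal (gammaPDFReal_nonneg ha hr _), id_eq]
    _ = r ^ a / Real.Gamma a * ∫ u in Set.Ioi 0, u ^ (a - 1) * Real.exp (-((r - t) * u)) := by
        rw [← setIntegral_eq_integral_of_forall_compl_eq_zero hsupport,
          setIntegral_congr_fun measurableSet_Ici hdensity, integral_const_mul,
          integral_Ici_eq_integral_Ioi]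
    _ = (r / (r - t)) ^ a := by
        have := (Real.Gamma_pos_of_pos ha).ne'
        rw [Real.integral_rpow_mul_exp_neg_mul_Ioi ha (sub_pos.2 ht),
          Real.div_rpow hr.le (sub_pos.2 ht).le, Real.div_rpow zero_le_one (sub_pos.2 ht).le,
          Real.one_rpow]
        field_simp
    _ = (1 - t / r) ^ (-a) := by
        have hle : 0 ≤ (r - t) / r := div_nonneg (sub_pos.2 ht).le hr.le
        rw [one_sub_div hr.ne', Real.rpow_neg hle, ← Real.inv_rpow hle, inv_div]

variable (E : Type*) [NormedAddCommGroup E] [InnerProductSpace ℝ E] [FiniteDimensional ℝ E]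
  [MeasurableSpace E] [BorelSpace E]

/-- The law of `√u • z` for independent `u ∼ γ` and standard Gaussian `z`: the mixture of the
centred isotropic Gaussian measures on `E` whose variance has law `γ`. -/
noncomputable def gaussianMixture (γ : Measure ℝ) : Measure E :=
  (γ.prod (stdGaussian E)).map fun z => √z.1 • z.2

instance isProbabilityMeasure_gaussianMixture (γ : Measure ℝ) [IsProbabilityMeasure γ] :
    IsProbabilityMeasure (gaussianMixture E γ) :=
  Measure.isProbabilityMeasure_map (by fun_prop)

variable {E}

theorem charFun_gaussianMixture {γ : Measure ℝ} [IsFiniteMeasure γ] (hγ : ∀ᵐ u ∂γ, 0 ≤ u)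
    (ξ : E) : charFun (gaussianMixture E γ) ξ = mgf id γ (-(‖ξ‖ ^ 2 / 2)) := by
  have integrable_prod : Integrable (fun z : ℝ × E => exp (inner ℝ (√z.1 • z.2) ξ * I))
      (γ.prod (stdGaussian E)) :=
    .of_bound (Continuous.aestronglyMeasurable (by fun_prop)) 1
      (ae_of_all _ fun z => (norm_exp_ofReal_mul_I _).le)
  have integral_gaussian : ∀ᵐ u ∂γ, ∫ z, exp (inner ℝ (√u • z) ξ * I) ∂(stdGaussian E) =
      (Real.exp (-(‖ξ‖ ^ 2 / 2) * u) : ℝ) := by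
    filter_upwards [hγ] with u hu
    simp_rw [real_inner_smul_left, ← real_inner_smul_right _ ξ, ← charFun_apply]
    rw [charFun_stdGaussian, norm_smul, Real.norm_of_nonneg (Real.sqrt_nonneg u), ← ofReal_pow,
      mul_pow, Real.sq_sqrt hu]
    push_cast
    ring_nf
  rw [charFun_apply, gaussianMixture, integral_map (by fun_prop) (by fun_prop),
    integral_prod _ integrable_prod, integral_congr_ae integral_gaussian, integral_complex_ofReal]
  rfl

theorem exists_charFun_eq_one_add_norm_sq_rpow {a : ℝ} (ha : 0 ≤ a) :
    ∃ μ : Measure E, IsProbabilityMeasure μ ∧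
      ∀ ξ : E, charFun μ ((2 * Real.pi) • ξ) = ((1 + ‖ξ‖ ^ 2) ^ (-a) : ℝ) := by
  rcases ha.eq_or_lt with rfl | ha
  · exact ⟨Measure.dirac 0, inferInstance, fun ξ => by simp⟩
  -- With rate `2π²`, the exponent `-‖2πξ‖² / 2` turns `1 - t / r` into `1 + ‖ξ‖²`.
  have hrate : 0 < 2 * Real.pi ^ 2 := by positivity
  have := isProbabilityMeasure_gammaMeasure ha hrate
  refine ⟨gaussianMixture E (gammaMeasure a (2 * Real.pi ^ 2)), inferInstance, fun ξ => ?_⟩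
  rw [charFun_gaussianMixture (ae_gammaMeasure_nonneg _ _),
    mgf_id_gammaMeasure ha hrate (by nlinarith [sq_nonneg ‖(2 * Real.pi) • ξ‖]), norm_smul,
    Real.norm_of_nonneg Real.two_pi_pos.le]
  congr 2
  field_simp
  ring

end GaussianMixture

section DifferentialOperator

open LineDeriv MvPolynomial

variable {n : ℕ}

/-- The iterated partial derivative `∂^α φ` of a Schwartz function, as a Schwartz function. -/
noncomputable def schwartzMultiDeriv (α : Fin n → ℕ) (φ : 𝓢(EuclideanSpace ℝ (Fin n), ℂ)) :
    𝓢(EuclideanSpace ℝ (Fin n), ℂ) :=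
  (List.finRange n).foldr (fun j => (∂_{EuclideanSpace.single j (1 : ℝ)} ·)^[α j]) φ

theorem coe_schwartzMultiDeriv (α : Fin n → ℕ) (φ : 𝓢(EuclideanSpace ℝ (Fin n), ℂ)) :
    ⇑(schwartzMultiDeriv α φ) = multiDeriv n α φ := by
  have coe_iterate (j : Fin n) (k : ℕ) (ψ : 𝓢(EuclideanSpace ℝ (Fin n), ℂ)) :
      ⇑((∂_{EuclideanSpace.single j (1 : ℝ)} ·)^[k] ψ) = (pderivFun n j)^[k] ψ :=
    Function.Semiconj.iterate_right (f := fun ψ : 𝓢(EuclideanSpace ℝ (Fin n), ℂ) => ⇑ψ)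
      (fun _ => rfl) k ψ
  unfold schwartzMultiDeriv multiDeriv
  induction List.finRange n with
  | nil => rfl
  | cons j l ih => rw [List.foldr_cons, List.foldr_cons, coe_iterate, ih]

theorem fourier_lineDerivOp_single_iterate (j : Fin n) (k : ℕ)
    (φ : 𝓢(EuclideanSpace ℝ (Fin n), ℂ)) (ξ : EuclideanSpace ℝ (Fin n)) :
    𝓕 ((∂_{EuclideanSpace.single j (1 : ℝ)} ·)^[k] φ) ξ =
      (2 * Real.pi * I * ξ j) ^ k * 𝓕 φ ξ := by
  induction k with
  | zero => simp
  | succ k ih =>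
    rw [Function.iterate_succ_apply', SchwartzMap.fourier_lineDerivOp_eq, _root_.smul_apply,
      SchwartzMap.smulLeftCLM_apply_apply (by fun_prop), ih, EuclideanSpace.inner_single_right]
    simp only [Real.ringHom_apply, one_mul, real_smul, smul_eq_mul]
    ring

theorem fourier_schwartzMultiDeriv (α : Fin n → ℕ) (φ : 𝓢(EuclideanSpace ℝ (Fin n), ℂ))
    (ξ : EuclideanSpace ℝ (Fin n)) :
    𝓕 (schwartzMultiDeriv α φ) ξ = (∏ j, (2 * Real.pi * I * ξ j) ^ α j) * 𝓕 φ ξ := by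
  rw [schwartzMultiDeriv, Fin.prod_univ_def]
  induction List.finRange n with
  | nil => simp
  | cons j l ih =>
    rw [List.foldr_cons, fourier_lineDerivOp_single_iterate, ih, List.map_cons, List.prod_cons,
      mul_assoc (_ ^ _)]

/-- The constant-coefficient differential operator `P(∂) = ∑ P_α ∂^α`. -/
noncomputable def diffOp (P : MvPolynomial (Fin n) ℂ) (φ : 𝓢(EuclideanSpace ℝ (Fin n), ℂ)) :
    𝓢(EuclideanSpace ℝ (Fin n), ℂ) :=
  ∑ α ∈ P.support, P.coeff α • schwartzMultiDeriv α φ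

theorem fourier_diffOp (P : MvPolynomial (Fin n) ℂ) (φ : 𝓢(EuclideanSpace ℝ (Fin n), ℂ))
    (ξ : EuclideanSpace ℝ (Fin n)) :
    𝓕 (diffOp P φ) ξ = eval (fun j => 2 * Real.pi * I * ξ j) P * 𝓕 φ ξ := by
  rw [diffOp, ← FourierTransform.fourierCLM_apply (R := ℂ), map_sum, _root_.sum_apply, eval_eq',
    Finset.sum_mul]
  refine Finset.sum_congr rfl fun α _ => ?_
  rw [map_smul, _root_.smul_apply, FourierTransform.fourierCLM_apply, fourier_schwartzMultiDeriv,
    smul_eq_mul, mul_assoc (P.coeff α)]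

theorem mem_multiIndicesLE {N : ℕ} {α : Fin n → ℕ} : α ∈ multiIndicesLE n N ↔ ∑ j, α j ≤ N := by
  simp only [multiIndicesLE, Finset.mem_filter, Fintype.mem_piFinset, Finset.mem_range,
    Nat.lt_succ_iff, and_iff_right_iff_imp]
  exact fun h j => (Finset.single_le_sum_of_canonicallyOrdered (Finset.mem_univ j)).trans h

theorem eLpNorm_diffOp_le {P : MvPolynomial (Fin n) ℂ} {N : ℕ} (hP : P.totalDegree ≤ N)
    (μ : Measure (EuclideanSpace ℝ (Fin n))) {p : ℝ≥0∞} (hp : 1 ≤ p)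
    (φ : 𝓢(EuclideanSpace ℝ (Fin n), ℂ)) :
    eLpNorm (diffOp P φ) p μ ≤
      (∑ α ∈ P.support, ‖P.coeff α‖ₑ) *
        ∑ α ∈ multiIndicesLE n N, eLpNorm (multiDeriv n α φ) p μ := by
  have mem_of_mem_support {α : Fin n →₀ ℕ} (hα : α ∈ P.support) : ⇑α ∈ multiIndicesLE n N := by
    rw [mem_multiIndicesLE, ← Finsupp.sum_fintype α (fun _ k => k) fun _ => rfl]
    exact (le_totalDegree hα).trans hP
  calc eLpNorm (diffOp P φ) p μ
      = eLpNorm (∑ α ∈ P.support, P.coeff α • ⇑(schwartzMultiDeriv α φ)) p μ := by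
        congr 1
        ext x
        simp [diffOp]
    _ ≤ ∑ α ∈ P.support, eLpNorm (P.coeff α • ⇑(schwartzMultiDeriv α φ)) p μ :=
        eLpNorm_sum_le (fun α _ =>
          ((SchwartzMap.continuous _).aestronglyMeasurable.const_smul _)) hp
    _ = ∑ α ∈ P.support, ‖P.coeff α‖ₑ * eLpNorm (multiDeriv n α φ) p μ := by
        simp_rw [eLpNorm_const_smul, coe_schwartzMultiDeriv]
    _ ≤ _ := by
        rw [Finset.sum_mul]
        gcongr with α hα
        exact Finset.single_le_sum_of_canonicallyOrdered
          (f := fun α => eLpNorm (multiDeriv n α φ) p μ) (mem_of_mem_support hα)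

end DifferentialOperator

section BesselPotential

open MvPolynomial

/-- The polynomial `P` for which `P(∂)` is `1 - (2π)⁻² Δ`, the inverse of the Bessel potential of
order `2` under Mathlib's normalization of the Fourier transform. -/
noncomputable def oneSubLaplacianPoly (n : ℕ) : MvPolynomial (Fin n) ℂ :=
  1 - C ((2 * Real.pi : ℂ) ^ 2)⁻¹ * ∑ j, X j ^ 2

theorem totalDegree_oneSubLaplacianPoly_pow_le (n m : ℕ) :
    (oneSubLaplacianPoly n ^ m).totalDegree ≤ 2 * m := by
  have hsum : (∑ j, X j ^ 2 : MvPolynomial (Fin n) ℂ).totalDegree ≤ 2 :=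
    totalDegree_finsetSum_le fun j _ => (totalDegree_X_pow j 2).le
  have hbase : (oneSubLaplacianPoly n).totalDegree ≤ 2 := by
    refine (totalDegree_sub _ _).trans (max_le (by simp) ?_)
    rw [C_mul']
    exact (totalDegree_smul_le _ _).trans hsum
  calc (oneSubLaplacianPoly n ^ m).totalDegree ≤ m * (oneSubLaplacianPoly n).totalDegree :=
        totalDegree_pow _ m
    _ ≤ m * 2 := by gcongr
    _ = 2 * m := mul_comm m 2

theorem eval_oneSubLaplacianPoly {n : ℕ} (ξ : EuclideanSpace ℝ (Fin n)) :
    eval (fun j => 2 * Real.pi * I * ξ j) (oneSubLaplacianPoly n) = 1 + (‖ξ‖ : ℂ) ^ 2 := by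
  have hpi : (Real.pi : ℂ) ≠ 0 := ofReal_ne_zero.2 Real.pi_ne_zero
  have hnorm : (‖ξ‖ : ℂ) ^ 2 = ∑ j, (ξ j : ℂ) ^ 2 := by
    exact_mod_cast EuclideanSpace.real_norm_sq_eq ξ
  simp only [oneSubLaplacianPoly, map_sub, map_one, map_mul, eval_C, map_sum, map_pow, eval_X,
    hnorm, mul_pow, I_sq, ← Finset.mul_sum]
  field_simp
  ring

theorem besselPotential_neg_eq_fourierInv_diffOp {n : ℕ} (s : ℝ) (m : ℕ)
    (φ : 𝓢(EuclideanSpace ℝ (Fin n), ℂ)) :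
    besselPotential n (-(s : ℂ)) φ =
      𝓕⁻ fun ξ => (((1 + ‖ξ‖ ^ 2) ^ (-(m - s / 2)) : ℝ) : ℂ) •
        𝓕 (⇑(diffOp (oneSubLaplacianPoly n ^ m) φ)) ξ := by
  unfold besselPotential
  congr 1 with ξ
  have hpos : 0 < 1 + ‖ξ‖ ^ 2 := by positivity
  have hne : (1 : ℂ) + (‖ξ‖ : ℂ) ^ 2 ≠ 0 := by exact_mod_cast hpos.ne'
  rw [← SchwartzMap.fourier_coe, ← SchwartzMap.fourier_coe, fourier_diffOp, map_pow,
    eval_oneSubLaplacianPoly, ofReal_cpow hpos.le, smul_eq_mul, ← mul_assoc]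
  push_cast
  rw [← cpow_natCast _ m, ← cpow_add _ _ hne]
  ring_nf

theorem eLpNorm_besselPotential_neg_le {n m : ℕ} {s : ℝ} (hs : s ≤ 2 * m) {p : ℝ≥0∞}
    (hp : 1 ≤ p) (φ : 𝓢(EuclideanSpace ℝ (Fin n), ℂ)) :
    eLpNorm (besselPotential n (-(s : ℂ)) φ) p volume ≤
      eLpNorm (diffOp (oneSubLaplacianPoly n ^ m) φ) p volume := by
  obtain ⟨μ, _, hμ⟩ := exists_charFun_eq_one_add_norm_sq_rpow (E := EuclideanSpace ℝ (Fin n))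
    (a := m - s / 2) (by linarith)
  set ψ := diffOp (oneSubLaplacianPoly n ^ m) φ with hψ
  rw [besselPotential_neg_eq_fourierInv_diffOp s m, ← hψ]
  simp_rw [← hμ]
  exact eLpNorm_fourierInv_charFun_smul_fourier_le μ ψ.continuous ψ.integrable
    (SchwartzMap.fourier_coe ψ ▸ (𝓕 ψ).integrable) hp

end BesselPotential

theorem besselPotential_le_sum_multiDeriv_general (n m : ℕ) :
    ∃ C : ℝ, 0 < C ∧ ∀ p : ℝ≥0∞, 1 ≤ p → ∀ s : ℝ, s ≤ 2 * m →
      ∀ φ : 𝓢(EuclideanSpace ℝ (Fin n), ℂ),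
        eLpNorm (besselPotential n (-(s : ℂ)) ⇑φ) p volume ≤
          ENNReal.ofReal C *
            ∑ α ∈ multiIndicesLE n (2 * m), eLpNorm (multiDeriv n α ⇑φ) p volume := by
  set P := oneSubLaplacianPoly n ^ m
  set C := ∑ α ∈ P.support, ‖P.coeff α‖ with hC
  have hCe : ∑ α ∈ P.support, ‖P.coeff α‖ₑ = ENNReal.ofReal C := by
    simp_rw [hC, ENNReal.ofReal_sum_of_nonneg fun _ _ => norm_nonneg _, ofReal_norm]
  refine ⟨C + 1, by positivity, fun p hp s hs φ => ?_⟩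
  calc eLpNorm (besselPotential n (-(s : ℂ)) φ) p volume
      ≤ eLpNorm (diffOp P φ) p volume := eLpNorm_besselPotential_neg_le hs hp φ
    _ ≤ ENNReal.ofReal C * ∑ α ∈ multiIndicesLE n (2 * m), eLpNorm (multiDeriv n α φ) p volume :=
        hCe ▸ eLpNorm_diffOp_le (totalDegree_oneSubLaplacianPoly_pow_le n m) volume hp φ
    _ ≤ _ := by gcongr; exact le_add_of_nonneg_right zero_le_one

/-- For `1 ≤ p ≤ ∞`, `s > 0` and a positive integer `m` with `2m ≥ s`, one has
`‖J_{-s} φ‖_p ≤ C · Σ_{|α| ≤ 2m} ‖∂^α φ‖_p` for all Schwartz `φ`. -/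
theorem besselPotential_le_sum_multiDeriv (n : ℕ) (p : ℝ≥0∞) (hp : 1 ≤ p)
    (s : ℝ) (hs : 0 < s) (m : ℕ) (hm : 0 < m) (hms : s ≤ 2 * m) :
    ∃ C : ℝ, 0 < C ∧ ∀ φ : 𝓢(EuclideanSpace ℝ (Fin n), ℂ),
      eLpNorm (besselPotential n (-(s : ℂ)) ⇑φ) p volume ≤
        ENNReal.ofReal C *
          ∑ α ∈ multiIndicesLE n (2 * m), eLpNorm (multiDeriv n α ⇑φ) p volume := by
  obtain ⟨C, hC, hle⟩ := besselPotential_le_sum_multiDeriv_general n m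
  exact ⟨C, hC, hle p hp s hms⟩
end

section
/- (M. W. Wong's inequality.) Let 1 ≤ q < ∞ and let 0 < s < t be real numbers. Then for every ε > 0 there exists a constant C > 0 such that ‖J_{−s} φ‖_q ≤ ε ‖J_{−t} φ‖_q + C ‖φ‖_q for all φ ∈ 𝒮(ℝⁿ). -/
open MeasureTheory Complex
open scoped FourierTransform ENNReal SchwartzMap

/-!
Write `γ = (t - s) / 2`. The function `(1 + |ξ|²)^(-γ)` is the Laplace transform `∫ e^(-r|ξ|²)
dΓ(r)` of the gamma distribution `Γ` with shape `γ` and rate `1`, and each heat multiplier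
`e^(-r|ξ|²)` is an average of translations, hence a contraction of `L^q`. Split the superposition
at a small `δ > 0`. The part `r ≤ δ` has multiplier norm at most `Γ([0, δ]) < ε`; it acts on
`J_{-t} φ`. On the part `r > δ` a factor `e^(-δ|ξ|²)` can be pulled out, and `e^(-δ|ξ|²) (1 +
|ξ|²)^(t/2)` is a Schwartz function, so that this part is bounded on `L^q` and acts on `φ` itself.
-/

section Minkowski

variable {Ω X F 𝕜 : Type*} [MeasurableSpace Ω] [MeasurableSpace X] [NormedAddCommGroup F]
  [NormedSpace ℝ F] [NormedField 𝕜] [NormedSpace 𝕜 F] {μ : Measure Ω} {ν : Measure X}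

theorem enorm_integral_smul_rpow_le {c : Ω → 𝕜} (hc : AEStronglyMeasurable c μ) {f : Ω → F}
    (hf : AEStronglyMeasurable f μ) {p : ℝ} (hp : 1 ≤ p) :
    ‖∫ ω, c ω • f ω ∂μ‖ₑ ^ p ≤
      (∫⁻ ω, ‖c ω‖ₑ ∂μ) ^ (p - 1) * ∫⁻ ω, ‖c ω‖ₑ * ‖f ω‖ₑ ^ p ∂μ := by
  have hp₀ : 0 < p := zero_lt_one.trans_le hp
  set ρ : Measure Ω := μ.withDensity fun ω => ‖c ω‖ₑ with hρ
  have hfρ : AEStronglyMeasurable f ρ := hf.mono_ac (withDensity_absolutelyContinuous _ _)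
  have lintegral_ρ {h : Ω → ℝ≥0∞} (hh : AEMeasurable h μ) :
      ∫⁻ ω, h ω ∂ρ = ∫⁻ ω, ‖c ω‖ₑ * h ω ∂μ :=
    lintegral_withDensity_eq_lintegral_mul₀ hc.enorm hh
  calc ‖∫ ω, c ω • f ω ∂μ‖ₑ ^ p
      ≤ (∫⁻ ω, ‖f ω‖ₑ ∂ρ) ^ p := by
        rw [lintegral_ρ hf.enorm]
        simp_rw [← enorm_smul]
        gcongr
        exact enorm_integral_le_lintegral_enorm _
    _ ≤ (eLpNorm' f p ρ * ρ Set.univ ^ (1 / 1 - 1 / p)) ^ p := by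
        gcongr
        simpa only [eLpNorm'_eq_lintegral_enorm, ENNReal.rpow_one, div_one] using
          eLpNorm'_le_eLpNorm'_mul_rpow_measure_univ one_pos hp hfρ
    _ = ρ Set.univ ^ (p - 1) * ∫⁻ ω, ‖f ω‖ₑ ^ p ∂ρ := by
        rw [ENNReal.mul_rpow_of_nonneg _ _ hp₀.le, eLpNorm'_eq_lintegral_enorm, ← ENNReal.rpow_mul,
          ← ENNReal.rpow_mul, one_div_mul_cancel hp₀.ne', ENNReal.rpow_one, sub_mul,
          one_div_mul_cancel hp₀.ne', one_div_one, one_mul, mul_comm]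
    _ = _ := by
        rw [lintegral_ρ (hf.enorm.pow_const p), hρ, withDensity_apply _ .univ, setLIntegral_univ]

variable [SFinite μ] [SFinite ν]

theorem eLpNorm_top_integral_smul_le {c : Ω → 𝕜} (hc : AEStronglyMeasurable c μ) {g : Ω → X → F}
    (hg : StronglyMeasurable (Function.uncurry g)) {B : ℝ≥0∞}
    (hB : ∀ᵐ ω ∂μ, eLpNorm (g ω) ∞ ν ≤ B) :
    eLpNorm (fun x => ∫ ω, c ω • g ω x ∂μ) ∞ ν ≤ (∫⁻ ω, ‖c ω‖ₑ ∂μ) * B := by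
  have hgB : ∀ᵐ ω ∂μ, ∀ᵐ x ∂ν, ‖g ω x‖ₑ ≤ B := by
    filter_upwards [hB] with ω hω
    filter_upwards [enorm_ae_le_eLpNormEssSup (g ω) ν] with x hx
    exact hx.trans (by simpa using hω)
  have hgB' : ∀ᵐ x ∂ν, ∀ᵐ ω ∂μ, ‖g ω x‖ₑ ≤ B :=
    (Measure.ae_ae_comm (p := fun ω x => ‖g ω x‖ₑ ≤ B)
      (measurableSet_le hg.enorm measurable_const)).1 hgB
  rw [eLpNorm_exponent_top]
  refine essSup_le_of_ae_le _ (hgB'.mono fun x hx => ?_)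
  calc ‖∫ ω, c ω • g ω x ∂μ‖ₑ
      ≤ ∫⁻ ω, ‖c ω‖ₑ * ‖g ω x‖ₑ ∂μ := by
        simpa only [enorm_smul] using enorm_integral_le_lintegral_enorm fun ω => c ω • g ω x
    _ ≤ ∫⁻ ω, ‖c ω‖ₑ * B ∂μ := lintegral_mono_ae (hx.mono fun ω hω => by gcongr)
    _ = (∫⁻ ω, ‖c ω‖ₑ ∂μ) * B := lintegral_mul_const'' _ hc.enorm

theorem eLpNorm_integral_smul_le {c : Ω → 𝕜} (hc : AEStronglyMeasurable c μ) {g : Ω → X → F}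
    (hg : StronglyMeasurable (Function.uncurry g)) {q : ℝ≥0∞} (hq : 1 ≤ q) {B : ℝ≥0∞}
    (hB : ∀ᵐ ω ∂μ, eLpNorm (g ω) q ν ≤ B) :
    eLpNorm (fun x => ∫ ω, c ω • g ω x ∂μ) q ν ≤ (∫⁻ ω, ‖c ω‖ₑ ∂μ) * B := by
  obtain rfl | hq' := eq_or_ne q ∞
  · exact eLpNorm_top_integral_smul_le hc hg hB
  set p := q.toReal
  set M := ∫⁻ ω, ‖c ω‖ₑ ∂μ
  have hp : 1 ≤ p := by simpa using ENNReal.toReal_mono hq' hq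
  have hp₀ : 0 < p := zero_lt_one.trans_le hp
  have hM : M ^ (p - 1) * M = M ^ p := by
    conv_lhs => enter [2]; rw [← ENNReal.rpow_one M]
    rw [← ENNReal.rpow_add_of_nonneg _ _ (sub_nonneg.2 hp) zero_le_one, sub_add_cancel]
  have lintegral_le {h : X → F} {A : ℝ≥0∞} :
      eLpNorm h q ν ≤ A ↔ ∫⁻ x, ‖h x‖ₑ ^ p ∂ν ≤ A ^ p := by
    rw [eLpNorm_eq_lintegral_rpow_enorm_toReal (zero_lt_one.trans_le hq).ne' hq', one_div,
      ENNReal.rpow_inv_le_iff hp₀]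
  have hmeas : AEMeasurable (fun z : X × Ω => ‖c z.2‖ₑ * ‖g z.2 z.1‖ₑ ^ p) (ν.prod μ) :=
    hc.enorm.comp_snd.mul
      ((hg.comp_measurable measurable_swap).enorm.pow_const p).aemeasurable
  rw [lintegral_le]
  calc ∫⁻ x, ‖∫ ω, c ω • g ω x ∂μ‖ₑ ^ p ∂ν
      ≤ ∫⁻ x, M ^ (p - 1) * ∫⁻ ω, ‖c ω‖ₑ * ‖g ω x‖ₑ ^ p ∂μ ∂ν :=
        lintegral_mono fun x => enorm_integral_smul_rpow_le hc
          (hg.comp_measurable measurable_prodMk_right).aestronglyMeasurable hp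
    _ = M ^ (p - 1) * ∫⁻ ω, ‖c ω‖ₑ * ∫⁻ x, ‖g ω x‖ₑ ^ p ∂ν ∂μ := by
        rw [lintegral_const_mul'' _ hmeas.lintegral_prod_right', lintegral_lintegral_swap hmeas]
        congr 2 with ω
        exact lintegral_const_mul ‖c ω‖ₑ
          ((hg.comp_measurable (measurable_prodMk_left (x := ω))).enorm.pow_const p)
    _ ≤ M ^ (p - 1) * ∫⁻ ω, ‖c ω‖ₑ * B ^ p ∂μ := by
        gcongr M ^ (p - 1) * ?_
        exact lintegral_mono_ae (hB.mono fun ω hω => by gcongr; exact lintegral_le.1 hω)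
    _ = (M * B) ^ p := by
        rw [lintegral_mul_const'' _ hc.enorm, ENNReal.mul_rpow_of_nonneg _ _ hp₀.le, ← hM,
          mul_assoc]

end Minkowski

section Multipliers

variable {V F Ω : Type*} [NormedAddCommGroup V] [InnerProductSpace ℝ V] [FiniteDimensional ℝ V]
  [MeasurableSpace V] [BorelSpace V] [NormedAddCommGroup F] [NormedSpace ℂ F]
  [MeasurableSpace Ω] {μ : Measure Ω} {q A B : ℝ≥0∞}

theorem integrable_fourierChar_inner_smul {f : V → F} (hf : Integrable f) (x : V) :
    Integrable (fun v => Real.fourierChar (inner ℝ v x) • f v) := by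
  simpa using (Real.fourierIntegral_convergent_iff (-x)).2 hf

theorem continuous_fourierInv {f : V → F} (hf : Integrable f) : Continuous (𝓕⁻ f) := by
  have h : Continuous (𝓕 f) := VectorFourier.fourierIntegral_continuous Real.continuous_fourierChar
    continuous_inner hf
  convert h.comp continuous_neg using 1
  exact funext (Real.fourierInv_eq_fourier_neg f)

theorem fourierInv_add {f g : V → F} (hf : Integrable f) (hg : Integrable g) :
    𝓕⁻ (f + g) = 𝓕⁻ f + 𝓕⁻ g := by
  ext x
  simp only [Real.fourierInv_eq, Pi.add_apply, smul_add]
  exact integral_add (integrable_fourierChar_inner_smul hf x)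
    (integrable_fourierChar_inner_smul hg x)

theorem fourierInv_integral [SFinite μ] {f : Ω → V → F}
    (hf : Integrable (Function.uncurry f) (μ.prod volume)) (x : V) :
    𝓕⁻ (fun ξ => ∫ ω, f ω ξ ∂μ) x = ∫ ω, 𝓕⁻ (f ω) x ∂μ := by
  have hint : Integrable
      (fun z : Ω × V => Real.fourierChar (inner ℝ z.2 x) • f z.1 z.2) (μ.prod volume) := by
    refine hf.norm.mono' ?_ (.of_forall fun z => (Circle.norm_smul _ _).le)
    have hchar : Continuous fun ξ : V => (Real.fourierChar (inner ℝ ξ x) : ℂ) := by fun_prop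
    exact (hchar.aestronglyMeasurable.comp_measurable measurable_snd).smul hf.1
  simp only [Real.fourierInv_eq, Circle.smul_def, ← integral_smul]
  exact (integral_integral_swap hint).symm

theorem stronglyMeasurable_uncurry_fourierInv {f : Ω → V → F}
    (hf : StronglyMeasurable (Function.uncurry f)) :
    StronglyMeasurable (Function.uncurry fun ω => 𝓕⁻ (f ω)) := by
  have hchar : Continuous fun z : V × V => (Real.fourierChar (inner ℝ z.1 z.2) : ℂ) := by fun_prop
  have swap₁ : Measurable fun z : (Ω × V) × V => (z.2, z.1.2) := by fun_prop
  have swap₂ : Measurable fun z : (Ω × V) × V => (z.1.1, z.2) := by fun_prop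
  have h := (hchar.stronglyMeasurable.comp_measurable swap₁).smul (hf.comp_measurable swap₂)
  convert h.integral_prod_right' (ν := volume) using 1
  exact funext fun z => Real.fourierInv_eq (f z.1) z.2

theorem coe_fourierMultiplierCLM {g : V → ℂ} (hg : g.HasTemperateGrowth) (φ : 𝓢(V, F)) :
    ⇑(SchwartzMap.fourierMultiplierCLM F g φ) = 𝓕⁻ fun ξ => g ξ • 𝓕 (φ : V → F) ξ := by
  rw [SchwartzMap.fourierMultiplierCLM_apply, SchwartzMap.fourierInv_coe]
  congr 1 with ξ
  rw [SchwartzMap.smulLeftCLM_apply_apply hg, SchwartzMap.fourier_coe]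

variable (F) in
/-- The function `m : V → ℂ` is a Fourier multiplier on `L^q(V; F)` with operator norm at most `A`,
as tested on Schwartz functions. Integrability of `m • 𝓕 φ` is required because `𝓕⁻` of a
non-integrable function is the junk value `0`. -/
structure IsLpMultiplierWith (q A : ℝ≥0∞) (m : V → ℂ) : Prop where
  integrable_smul_fourier (φ : 𝓢(V, F)) : Integrable fun ξ => m ξ • 𝓕 (φ : V → F) ξ
  eLpNorm_fourierInv_le (φ : 𝓢(V, F)) :
    eLpNorm (𝓕⁻ fun ξ => m ξ • 𝓕 (φ : V → F) ξ) q volume ≤ A * eLpNorm φ q volume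

namespace IsLpMultiplierWith

theorem mono {m : V → ℂ} (hm : IsLpMultiplierWith F q A m) (hAB : A ≤ B) :
    IsLpMultiplierWith F q B m where
  integrable_smul_fourier := hm.integrable_smul_fourier
  eLpNorm_fourierInv_le φ := (hm.eLpNorm_fourierInv_le φ).trans (by gcongr)

variable [CompleteSpace F]

theorem integral_mul [SFinite μ] (hq : 1 ≤ q) {c : Ω → ℂ} (hc : Integrable c μ)
    {m : Ω → V → ℂ} (hm_meas : Measurable (Function.uncurry m)) {R : ℝ}
    (hmR : ∀ᵐ ω ∂μ, ∀ ξ, ‖m ω ξ‖ ≤ R) (hm : ∀ᵐ ω ∂μ, IsLpMultiplierWith F q A (m ω)) :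
    IsLpMultiplierWith F q ((∫⁻ ω, ‖c ω‖ₑ ∂μ) * A) fun ξ => ∫ ω, c ω * m ω ξ ∂μ := by
  have hint (φ : 𝓢(V, F)) : Integrable
      (Function.uncurry fun ω ξ => c ω • m ω ξ • 𝓕 (φ : V → F) ξ) (μ.prod volume) := by
    have hφ : Integrable (𝓕 (φ : V → F)) := (𝓕 φ : 𝓢(V, F)).integrable
    have h := (hc.smul_prod hφ).bdd_smul (C := R) (φ := Function.uncurry m)
      hm_meas.aestronglyMeasurable
      ((Measure.quasiMeasurePreserving_fst.ae hmR).mono fun z hz => hz z.2)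
    exact h.congr (.of_forall fun z => smul_comm _ _ _)
  have integral_smul_fourier (φ : 𝓢(V, F)) : (fun ξ => (∫ ω, c ω * m ω ξ ∂μ) • 𝓕 (φ : V → F) ξ) =
      fun ξ => ∫ ω, c ω • m ω ξ • 𝓕 (φ : V → F) ξ ∂μ := by
    simp_rw [← mul_smul, integral_smul_const]
  refine ⟨fun φ => ?_, fun φ => ?_⟩
  · rw [integral_smul_fourier]
    exact (hint φ).integral_prod_right
  · have superposition : (𝓕⁻ fun ξ => (∫ ω, c ω * m ω ξ ∂μ) • 𝓕 (φ : V → F) ξ) =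
        fun x => ∫ ω, c ω • 𝓕⁻ (fun ξ => m ω ξ • 𝓕 (φ : V → F) ξ) x ∂μ := by
      ext x
      rw [integral_smul_fourier, fourierInv_integral (hint φ)]
      congr 1 with ω
      simp only [Real.fourierInv_eq, smul_comm _ (c ω), integral_smul]
    have hmeas : StronglyMeasurable (Function.uncurry fun ω =>
        𝓕⁻ fun ξ => m ω ξ • 𝓕 (φ : V → F) ξ) := by
      refine stronglyMeasurable_uncurry_fourierInv (hm_meas.stronglyMeasurable.smul ?_)
      exact (𝓕 φ : 𝓢(V, F)).continuous.stronglyMeasurable.comp_measurable measurable_snd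
    rw [superposition, mul_assoc]
    refine eLpNorm_integral_smul_le hc.1 hmeas hq ?_
    exact hm.mono fun ω hω => hω.eLpNorm_fourierInv_le φ

end IsLpMultiplierWith

variable [CompleteSpace F]

theorem isLpMultiplierWith_fourierChar (a : V) :
    IsLpMultiplierWith F q 1 fun ξ : V => (Real.fourierChar (-inner ℝ a ξ) : ℂ) := by
  have translate (φ : 𝓢(V, F)) : (fun ξ => (Real.fourierChar (-inner ℝ a ξ) : ℂ) •
      𝓕 (φ : V → F) ξ) = 𝓕 (φ.compSubConstCLM ℂ a : 𝓢(V, F)) := by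
    have h := VectorFourier.fourierIntegral_comp_add_right Real.fourierChar volume (innerₗ V) φ (-a)
    ext ξ
    rw [SchwartzMap.fourier_coe]
    simp only [Function.comp_def, ← sub_eq_add_neg, map_neg] at h
    exact (congrFun h ξ).symm
  constructor
  · intro φ
    rw [translate]
    exact SchwartzMap.integrable _
  · intro φ
    rw [translate, ← SchwartzMap.fourierInv_coe, FourierTransform.fourierInv_fourier_eq, one_mul]
    exact (eLpNorm_comp_measurePreserving φ.continuous.aestronglyMeasurable
      (measurePreserving_sub_right volume a)).le


theorem isLpMultiplierWith_fourier (hq : 1 ≤ q) {K : V → ℂ} (hK : Integrable K) :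
    IsLpMultiplierWith F q (∫⁻ x, ‖K x‖ₑ) (𝓕 K) := by
  have h := IsLpMultiplierWith.integral_mul (F := F) hq hK
    (m := fun a ξ : V => (Real.fourierChar (-inner ℝ a ξ) : ℂ))
    (Continuous.measurable (by fun_prop)) (R := 1)
    (.of_forall fun a ξ => (Circle.norm_coe _).le)
    (.of_forall isLpMultiplierWith_fourierChar)
  simp only [mul_comm (K _), mul_one] at h
  simpa only [← smul_eq_mul, ← Circle.smul_def, ← Real.fourier_eq] using h

theorem isLpMultiplierWith_schwartzMap (hq : 1 ≤ q) (G : 𝓢(V, ℂ)) :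
    IsLpMultiplierWith F q (∫⁻ x, ‖(𝓕⁻ G : 𝓢(V, ℂ)) x‖ₑ) G := by
  have h := isLpMultiplierWith_fourier (F := F) hq (𝓕⁻ G : 𝓢(V, ℂ)).integrable
  rwa [← SchwartzMap.fourier_coe, FourierTransform.fourier_fourierInv_eq] at h

theorem isLpMultiplierWith_charFun_smul (hq : 1 ≤ q) (P : Measure V) [IsFiniteMeasure P] (a : ℝ) :
    IsLpMultiplierWith F q (P Set.univ) fun ξ => charFun P (a • ξ) := by
  have h := IsLpMultiplierWith.integral_mul (F := F) (μ := P) hq (integrable_const 1)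
    (m := fun z ξ : V => (Real.fourierChar (-inner ℝ (-(a / (2 * Real.pi)) • z) ξ) : ℂ))
    (Continuous.measurable (by fun_prop)) (R := 1)
    (.of_forall fun z ξ => (Circle.norm_coe _).le)
    (.of_forall fun z => isLpMultiplierWith_fourierChar _)
  convert h using 1
  · simp
  · ext ξ
    rw [charFun_apply]
    congr 1 with z
    rw [one_mul, Real.fourierChar_apply]
    congr 2
    simp [inner_smul_left, inner_smul_right]
    field_simp

theorem isLpMultiplierWith_exp_neg_mul_norm_sq (hq : 1 ≤ q) {r : ℝ} (hr : 0 ≤ r) :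
    IsLpMultiplierWith F q 1 fun ξ : V => (Real.exp (-(r * ‖ξ‖ ^ 2)) : ℂ) := by
  have h := isLpMultiplierWith_charFun_smul (F := F) hq (ProbabilityTheory.stdGaussian V) √(2 * r)
  rw [measure_univ] at h
  convert h using 2 with ξ
  rw [ProbabilityTheory.charFun_stdGaussian, ← Complex.ofReal_pow, norm_smul, mul_pow,
    Real.norm_eq_abs, sq_abs, Real.sq_sqrt (by positivity)]
  push_cast
  ring_nf

theorem isLpMultiplierWith_integral_exp_neg_mul_norm_sq (hq : 1 ≤ q) {ρ : Measure ℝ}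
    [IsFiniteMeasure ρ] (hρ : ∀ᵐ r ∂ρ, 0 ≤ r) :
    IsLpMultiplierWith F q (ρ Set.univ) fun ξ : V =>
      ((∫ r, Real.exp (-(r * ‖ξ‖ ^ 2)) ∂ρ : ℝ) : ℂ) := by
  have h := IsLpMultiplierWith.integral_mul (F := F) (μ := ρ) hq (integrable_const 1)
    (m := fun r (ξ : V) => (Real.exp (-(r * ‖ξ‖ ^ 2)) : ℂ))
    (Continuous.measurable (by fun_prop)) (R := 1)
    (hρ.mono fun r hr ξ => by
      rw [Complex.norm_of_nonneg (Real.exp_pos _).le, Real.exp_le_one_iff, neg_nonpos]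
      positivity)
    (hρ.mono fun r hr => isLpMultiplierWith_exp_neg_mul_norm_sq hq hr)
  simpa only [one_mul, mul_one, enorm_one, lintegral_const, integral_complex_ofReal] using h

theorem fourier_fourierMultiplierCLM {g : V → ℂ} (hg : g.HasTemperateGrowth) (φ : 𝓢(V, F)) :
    𝓕 (SchwartzMap.fourierMultiplierCLM F g φ : V → F) = fun ξ => g ξ • 𝓕 (φ : V → F) ξ := by
  ext ξ
  rw [← SchwartzMap.fourier_coe, SchwartzMap.fourierMultiplierCLM_apply,
    FourierTransform.fourier_fourierInv_eq, SchwartzMap.smulLeftCLM_apply_apply hg,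
    SchwartzMap.fourier_coe]

theorem IsLpMultiplierWith.mul {m g : V → ℂ} (hm : IsLpMultiplierWith F q A m)
    (hg : IsLpMultiplierWith F q B g) (hg' : g.HasTemperateGrowth) :
    IsLpMultiplierWith F q (A * B) (m * g) := by
  have mul_smul_fourier (φ : 𝓢(V, F)) : (fun ξ => (m * g) ξ • 𝓕 (φ : V → F) ξ) =
      fun ξ => m ξ • 𝓕 (SchwartzMap.fourierMultiplierCLM F g φ : V → F) ξ := by
    simp only [fourier_fourierMultiplierCLM hg', Pi.mul_apply, mul_smul]
  refine ⟨fun φ => ?_, fun φ => ?_⟩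
  · rw [mul_smul_fourier]
    exact hm.integrable_smul_fourier _
  · rw [mul_smul_fourier]
    calc _ ≤ A * eLpNorm (SchwartzMap.fourierMultiplierCLM F g φ) q volume :=
          hm.eLpNorm_fourierInv_le _
      _ ≤ A * (B * eLpNorm φ q volume) := by
          rw [coe_fourierMultiplierCLM hg']
          gcongr
          exact hg.eLpNorm_fourierInv_le φ
      _ = _ := (mul_assoc _ _ _).symm

theorem eLpNorm_fourierMultiplierCLM_le_add (hq : 1 ≤ q) {m₁ m₂ g h : V → ℂ}
    (hm₁ : IsLpMultiplierWith F q A m₁) (hm₂ : IsLpMultiplierWith F q B m₂)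
    (hg : g.HasTemperateGrowth) (hh : h.HasTemperateGrowth) (hdecomp : h = m₁ * g + m₂)
    (φ : 𝓢(V, F)) :
    eLpNorm (SchwartzMap.fourierMultiplierCLM F h φ) q volume ≤
      A * eLpNorm (SchwartzMap.fourierMultiplierCLM F g φ) q volume + B * eLpNorm φ q volume := by
  have h₁ := hm₁.integrable_smul_fourier (SchwartzMap.fourierMultiplierCLM F g φ)
  have h₂ := hm₂.integrable_smul_fourier φ
  have hsum : ⇑(SchwartzMap.fourierMultiplierCLM F h φ) =
      (𝓕⁻ fun ξ => m₁ ξ • 𝓕 (SchwartzMap.fourierMultiplierCLM F g φ : V → F) ξ) +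
        𝓕⁻ fun ξ => m₂ ξ • 𝓕 (φ : V → F) ξ := by
    rw [coe_fourierMultiplierCLM hh, ← fourierInv_add h₁ h₂, hdecomp]
    simp only [fourier_fourierMultiplierCLM hg, Pi.add_def, Pi.mul_apply, add_smul, mul_smul]
  rw [hsum]
  exact (eLpNorm_add_le (continuous_fourierInv h₁).aestronglyMeasurable
    (continuous_fourierInv h₂).aestronglyMeasurable hq).trans
    (add_le_add (hm₁.eLpNorm_fourierInv_le _) (hm₂.eLpNorm_fourierInv_le φ))

end Multipliers


section Gaussian

theorem exists_schwartzMap_eq_exp {E : Type*} [NormedAddCommGroup E] [NormedSpace ℝ E] {f : E → ℝ}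
    (hf : f.HasTemperateGrowth)
    (hdecay : ∀ N : ℕ, ∃ C, ∀ x, (1 + ‖x‖) ^ N * Real.exp (f x) ≤ C) :
    ∃ G : 𝓢(E, ℝ), ∀ x, G x = Real.exp (f x) := by
  refine ⟨⟨Real.exp ∘ f, Real.contDiff_exp.comp hf.1, fun k n => ?_⟩, fun x => rfl⟩
  obtain ⟨l, C, hC, hl⟩ := hf.norm_iteratedFDeriv_le_uniform n
  obtain ⟨D, hD⟩ := hdecay (k + l * n)
  refine ⟨n.factorial * (1 + C) ^ n * D, fun x => ?_⟩
  have hexp : ∀ i ≤ n, ‖iteratedFDeriv ℝ i Real.exp (f x)‖ ≤ Real.exp (f x) := fun i _ => by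
    rw [norm_iteratedFDeriv_eq_norm_iteratedDeriv, iteratedDeriv_eq_iterate, Real.iter_deriv_exp,
      Real.norm_eq_abs, Real.abs_exp]
  have hf' : ∀ i, 1 ≤ i → i ≤ n → ‖iteratedFDeriv ℝ i f x‖ ≤ ((1 + C) * (1 + ‖x‖) ^ l) ^ i := by
    intro i hi hin
    calc ‖iteratedFDeriv ℝ i f x‖
        ≤ C * (1 + ‖x‖) ^ l := hl i hin x
      _ ≤ (1 + C) * (1 + ‖x‖) ^ l := by gcongr; simp
      _ ≤ ((1 + C) * (1 + ‖x‖) ^ l) ^ i := le_self_pow₀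
          (one_le_mul_of_one_le_of_one_le (by simp [hC]) (by simp [one_le_pow₀])) (by lia)
  calc ‖x‖ ^ k * ‖iteratedFDeriv ℝ n (Real.exp ∘ f) x‖
      ≤ (1 + ‖x‖) ^ k * (n.factorial * Real.exp (f x) * ((1 + C) * (1 + ‖x‖) ^ l) ^ n) := by
        gcongr
        · linarith
        · exact norm_iteratedFDeriv_comp_le Real.contDiff_exp hf.1 (mod_cast le_top) x hexp hf'
    _ = n.factorial * (1 + C) ^ n * ((1 + ‖x‖) ^ (k + l * n) * Real.exp (f x)) := by
        rw [mul_pow, ← pow_mul, pow_add]; ring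
    _ ≤ n.factorial * (1 + C) ^ n * D := by gcongr; exact hD x

theorem one_add_pow_mul_exp_neg_mul_sq_le {δ : ℝ} (hδ : 0 < δ) (N : ℕ) {u : ℝ} (hu : 0 ≤ u) :
    (1 + u) ^ N * Real.exp (-(δ * u ^ 2)) ≤ (2 / δ) ^ N * N.factorial * Real.exp δ := by
  set y := δ * (1 + u ^ 2)
  have hpow : (1 + u) ^ N ≤ (2 / δ) ^ N * y ^ N := by
    rw [← mul_pow]
    gcongr
    simp only [y]
    field_simp
    nlinarith [sq_nonneg (u - 1)]
  have hy : y ^ N ≤ N.factorial * Real.exp y := by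
    have := Real.pow_div_factorial_le_exp y (by positivity) N
    rwa [div_le_iff₀' (by positivity)] at this
  calc (1 + u) ^ N * Real.exp (-(δ * u ^ 2))
      ≤ (2 / δ) ^ N * (N.factorial * Real.exp y) * Real.exp (-(δ * u ^ 2)) := by
        gcongr
        exact hpow.trans (by gcongr)
    _ = (2 / δ) ^ N * N.factorial * Real.exp δ := by
        rw [mul_assoc, mul_assoc, ← Real.exp_add]
        simp only [y]
        ring_nf

variable {V : Type*} [NormedAddCommGroup V] [InnerProductSpace ℝ V]

theorem exists_schwartzMap_eq_rpow_mul_exp {δ : ℝ} (hδ : 0 < δ) (b : ℝ) :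
    ∃ G : 𝓢(V, ℂ), ∀ ξ,
      G ξ = ((Real.exp (-(δ * ‖ξ‖ ^ 2)) * (1 + ‖ξ‖ ^ 2) ^ b : ℝ) : ℂ) := by
  obtain ⟨G, hG⟩ := exists_schwartzMap_eq_exp (f := fun ξ : V => -(δ * ‖ξ‖ ^ 2)) (by fun_prop)
    fun N => ⟨_, fun ξ => one_add_pow_mul_exp_neg_mul_sq_le hδ N (norm_nonneg ξ)⟩
  refine ⟨(SchwartzMap.smulLeftCLM ℝ (fun ξ : V => (1 + ‖ξ‖ ^ 2) ^ b) G).postcompCLM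
    Complex.ofRealCLM, fun ξ => ?_⟩
  simp [SchwartzMap.smulLeftCLM_apply_apply
    (Function.hasTemperateGrowth_one_add_norm_sq_rpow V b), hG, mul_comm]

end Gaussian


section Subordination

open ProbabilityTheory

theorem gammaMeasure_Iic_zero (a r : ℝ) : gammaMeasure a r (Set.Iic 0) = 0 := by
  rw [gammaMeasure, withDensity_apply _ measurableSet_Iic, setLIntegral_congr Iio_ae_eq_Iic.symm,
    lintegral_gammaPDF_of_nonpos le_rfl]

theorem ae_pos_gammaMeasure (a r : ℝ) : ∀ᵐ x ∂gammaMeasure a r, 0 < x := by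
  simpa only [Set.mem_Iic, not_le] using
    measure_eq_zero_iff_ae_notMem.1 (gammaMeasure_Iic_zero a r)

theorem integral_exp_neg_mul_gammaMeasure {a r u : ℝ} (ha : 0 < a) (hr : 0 < r) (hu : 0 ≤ u) :
    ∫ x, Real.exp (-(x * u)) ∂gammaMeasure a r = (r / (r + u)) ^ a := by
  have hΓ := (Real.Gamma_pos_of_pos ha).ne'
  have hru : 0 < r + u := by positivity
  calc ∫ x, Real.exp (-(x * u)) ∂gammaMeasure a r
      = ∫ x in Set.Ioi 0, gammaPDFReal a r x * Real.exp (-(x * u)) := by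
        rw [gammaMeasure, integral_withDensity_eq_integral_toReal_smul (f := gammaPDF a r)
          (measurable_gammaPDFReal a r).ennreal_ofReal (by simp [gammaPDF]),
          ← integral_Ici_eq_integral_Ioi, ← setIntegral_eq_integral_of_forall_compl_eq_zero
          (s := Set.Ici 0) fun x hx => by simp [gammaPDF_of_neg (not_le.1 hx)]]
        simp only [gammaPDF, ENNReal.toReal_ofReal (gammaPDFReal_nonneg ha hr _), smul_eq_mul]
    _ = ∫ x in Set.Ioi 0, r ^ a / Real.Gamma a * (x ^ (a - 1) * Real.exp (-((r + u) * x))) := by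
        refine setIntegral_congr_fun measurableSet_Ioi fun x hx => ?_
        simp only [gammaPDFReal, if_pos (Set.mem_Ioi.1 hx).le, mul_assoc, ← Real.exp_add]
        ring_nf
    _ = (r / (r + u)) ^ a := by
        rw [integral_const_mul, Real.integral_rpow_mul_exp_neg_mul_Ioi ha hru,
          Real.div_rpow hr.le hru.le, Real.div_rpow zero_le_one hru.le, Real.one_rpow]
        field_simp

theorem exists_gt_measure_Iic_lt {ρ : Measure ℝ} [IsFiniteMeasure ρ] {a : ℝ} {c : ℝ≥0∞}
    (hc : ρ (Set.Iic a) < c) : ∃ δ > a, ρ (Set.Iic δ) < c := by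
  have h := tendsto_measure_biInter_gt (μ := ρ) (s := Set.Iic) (a := a)
    (fun _ _ => measurableSet_Iic.nullMeasurableSet) (fun _ _ _ hij => Set.Iic_subset_Iic.2 hij)
    ⟨a + 1, by simp, measure_ne_top _ _⟩
  have hInter : ⋂ r > a, Set.Iic r = Set.Iic a := by
    ext x
    simpa using forall_gt_imp_ge_iff_le_of_dense
  rw [hInter] at h
  obtain ⟨δ, hδc, hδ⟩ := ((h.eventually_lt_const hc).and self_mem_nhdsWithin).exists
  exact ⟨δ, hδ, hδc⟩

theorem integral_exp_neg_mul_eq_add {ρ : Measure ℝ} [IsFiniteMeasure ρ] (hρ : ∀ᵐ r ∂ρ, 0 ≤ r)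
    (δ : ℝ) {u : ℝ} (hu : 0 ≤ u) :
    ∫ r, Real.exp (-(r * u)) ∂ρ = ∫ r, Real.exp (-(r * u)) ∂ρ.restrict (Set.Iic δ) +
      (∫ r, Real.exp (-(r * u)) ∂(ρ.restrict (Set.Ioi δ)).map (· - δ)) * Real.exp (-(δ * u)) := by
  have hint : Integrable (fun r => Real.exp (-(r * u))) ρ :=
    .of_bound (by fun_prop) 1 <| hρ.mono fun r hr => by
      rw [Real.norm_of_nonneg (Real.exp_pos _).le, Real.exp_le_one_iff, neg_nonpos]
      positivity
  rw [← integral_add_compl measurableSet_Iic hint, Set.compl_Iic,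
    integral_map (by fun_prop) (by fun_prop), ← integral_mul_const]
  congr 2 with r
  rw [← Real.exp_add]
  ring_nf

end Subordination

section Wong

open ProbabilityTheory

variable {V F : Type*} [NormedAddCommGroup V] [InnerProductSpace ℝ V] [FiniteDimensional ℝ V]
  [MeasurableSpace V] [BorelSpace V] [NormedAddCommGroup F] [NormedSpace ℂ F] [CompleteSpace F]
  {q : ℝ≥0∞}

variable (V F) in
theorem exists_one_add_norm_sq_rpow_eq_mul_add (hq : 1 ≤ q) {a b : ℝ} (hab : a < b) {ε : ℝ≥0∞}
    (hε : 0 < ε) :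
    ∃ C ≠ ∞, ∃ m₁ m₂ : V → ℂ, IsLpMultiplierWith F q ε m₁ ∧ IsLpMultiplierWith F q C m₂ ∧
      (fun ξ : V => (((1 + ‖ξ‖ ^ 2) ^ a : ℝ) : ℂ)) =
        m₁ * (fun ξ : V => (((1 + ‖ξ‖ ^ 2) ^ b : ℝ) : ℂ)) + m₂ := by
  have hba : 0 < b - a := sub_pos.2 hab
  set Γ := gammaMeasure (b - a) 1
  have : IsProbabilityMeasure Γ := isProbabilityMeasure_gammaMeasure hba one_pos
  have hΓ : ∀ᵐ r ∂Γ, 0 ≤ r := (ae_pos_gammaMeasure _ _).mono fun _ => le_of_lt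
  obtain ⟨δ, hδ, hδε⟩ := exists_gt_measure_Iic_lt ((gammaMeasure_Iic_zero (b - a) 1).trans_lt hε)
  obtain ⟨G, hG⟩ := exists_schwartzMap_eq_rpow_mul_exp (V := V) hδ b
  set head := Γ.restrict (Set.Iic δ)
  set tail := (Γ.restrict (Set.Ioi δ)).map (· - δ)
  have htail : ∀ᵐ r ∂tail, 0 ≤ r :=
    (ae_map_iff (by fun_prop) measurableSet_Ici).2 <|
      (ae_restrict_mem measurableSet_Ioi).mono fun r hr => (sub_pos.2 hr).le
  have hhead : IsLpMultiplierWith F q (Γ (Set.Iic δ)) fun ξ : V =>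
      ((∫ r, Real.exp (-(r * ‖ξ‖ ^ 2)) ∂head : ℝ) : ℂ) := by
    simpa only [head, Measure.restrict_apply_univ] using
      isLpMultiplierWith_integral_exp_neg_mul_norm_sq hq (ae_restrict_of_ae hΓ)
  refine ⟨tail Set.univ * ∫⁻ x, ‖(𝓕⁻ G : 𝓢(V, ℂ)) x‖ₑ, ENNReal.mul_ne_top (measure_ne_top _ _)
    (𝓕⁻ G : 𝓢(V, ℂ)).integrable.2.ne, _, _, hhead.mono hδε.le,
    (isLpMultiplierWith_integral_exp_neg_mul_norm_sq hq htail).mul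
      (isLpMultiplierWith_schwartzMap hq G) G.hasTemperateGrowth, ?_⟩
  ext ξ
  have hξ : 0 < 1 + ‖ξ‖ ^ 2 := by positivity
  have laplace : ∫ r, Real.exp (-(r * ‖ξ‖ ^ 2)) ∂head +
      (∫ r, Real.exp (-(r * ‖ξ‖ ^ 2)) ∂tail) * Real.exp (-(δ * ‖ξ‖ ^ 2)) =
        (1 + ‖ξ‖ ^ 2) ^ (-(b - a)) := by
    rw [← integral_exp_neg_mul_eq_add hΓ δ (sq_nonneg ‖ξ‖),
      integral_exp_neg_mul_gammaMeasure hba one_pos (sq_nonneg ‖ξ‖), one_div,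
      Real.inv_rpow hξ.le, Real.rpow_neg hξ.le]
  simp only [Pi.add_apply, Pi.mul_apply, hG]
  norm_cast
  rw [← mul_assoc, ← add_mul, laplace, ← Real.rpow_add hξ]
  ring_nf

theorem wong_inequality_general (hq : 1 ≤ q) {s t : ℝ} (hst : s < t) {ε : ℝ} (hε : 0 < ε) :
    ∃ C : ℝ, 0 < C ∧ ∀ φ : 𝓢(V, F),
      eLpNorm (SchwartzMap.fourierMultiplierCLM F (fun ξ : V => (1 + ‖ξ‖ ^ 2) ^ (s / 2)) φ) q
          volume ≤
        ENNReal.ofReal ε * eLpNorm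
            (SchwartzMap.fourierMultiplierCLM F (fun ξ : V => (1 + ‖ξ‖ ^ 2) ^ (t / 2)) φ) q volume +
          ENNReal.ofReal C * eLpNorm φ q volume := by
  obtain ⟨C, hC, m₁, m₂, hm₁, hm₂, hdecomp⟩ := exists_one_add_norm_sq_rpow_eq_mul_add V F hq
    (div_lt_div_of_pos_right hst two_pos) (ENNReal.ofReal_pos.2 hε)
  refine ⟨C.toReal + 1, by positivity, fun φ => ?_⟩
  have hCle : C ≤ ENNReal.ofReal (C.toReal + 1) :=
    (ENNReal.le_ofReal_iff_toReal_le hC (by positivity)).2 (by linarith)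
  simp only [← SchwartzMap.fourierMultiplierCLM_ofReal ℂ
    (Function.hasTemperateGrowth_one_add_norm_sq_rpow V _)]
  exact eLpNorm_fourierMultiplierCLM_le_add hq hm₁ (hm₂.mono hCle) (by fun_prop) (by fun_prop)
    hdecomp φ

end Wong

theorem besselPotential_neg_ofReal (n : ℕ) (s : ℝ) (φ : 𝓢(EuclideanSpace ℝ (Fin n), ℂ)) :
    besselPotential n (-(s : ℂ)) φ =
      SchwartzMap.fourierMultiplierCLM ℂ
        (fun ξ : EuclideanSpace ℝ (Fin n) => (1 + ‖ξ‖ ^ 2) ^ (s / 2)) φ := by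
  rw [← SchwartzMap.fourierMultiplierCLM_ofReal ℂ
    (Function.hasTemperateGrowth_one_add_norm_sq_rpow _ _), coe_fourierMultiplierCLM (by fun_prop),
    besselPotential]
  congr 1 with ξ
  rw [RCLike.ofReal_eq_complex_ofReal, Complex.ofReal_cpow (by positivity), neg_neg, smul_eq_mul]
  push_cast
  rfl

/-- M. W. Wong's inequality: for `1 ≤ q < ∞`, `0 < s < t` and every `ε > 0` there is
`C > 0` with `‖J_{-s} φ‖_q ≤ ε ‖J_{-t} φ‖_q + C ‖φ‖_q` for all Schwartz `φ`. -/
theorem wong_inequality (n : ℕ) (q : ℝ≥0∞) (hq : 1 ≤ q) (hq' : q ≠ ∞)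
    (s t : ℝ) (hs : 0 < s) (hst : s < t) :
    ∀ ε : ℝ, 0 < ε → ∃ C : ℝ, 0 < C ∧
      ∀ φ : 𝓢(EuclideanSpace ℝ (Fin n), ℂ),
        eLpNorm (besselPotential n (-(s : ℂ)) ⇑φ) q volume ≤
          ENNReal.ofReal ε * eLpNorm (besselPotential n (-(t : ℂ)) ⇑φ) q volume +
            ENNReal.ofReal C * eLpNorm (⇑φ) q volume := by
  intro ε hε
  simpa only [besselPotential_neg_ofReal] using wong_inequality_general hq hst hε
end
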